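/- arXiv:2409.07974 — 2 statements merged into one kernel-verified Lean document; each statement's English description precedes it below -/
import Mathlib

section
/- For every finite abelian group G and every finite field F, there exist n ≥ 2 and an injective group homomorphism G → GL_n(F) whose image consists entirely of invertible n×n Christoffel matrices over F. -/
/-- The `n × n` Christoffel matrix `C_m(a,b)`. -/
def christoffel (n m : ℕ) {R : Type*} (a b : R) : Matrix (Fin n) (Fin n) R :=
  Matrix.of fun i j =>
    if (((i : ℕ) : ZMod n) - (m : ZMod n) * ((j : ℕ) : ZMod n)).val < m then a else b

/-- A matrix is a Christoffel matrix if it equals `C_m(a,b)` for some `m` coprime to `n`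
and distinct `a, b`. -/
def IsChristoffel {R : Type*} (n : ℕ) (M : Matrix (Fin n) (Fin n) R) : Prop :=
  ∃ (m : ℕ) (a b : R), 1 ≤ m ∧ m < n ∧ Nat.Coprime m n ∧ a ≠ b ∧ M = christoffel n m a b

theorem cyc_embed (e : ℕ) (he : 1 < e) (N : ℕ) (hN : N ≠ 0) :
    ∃ n : ℕ, 2 ≤ n ∧ Nat.Coprime n N ∧
      ∃ f : Multiplicative (ZMod e) →* (ZMod n)ˣ, ∀ x, f x = 1 → x = 1 := by
  obtain ⟨p, hp, hNp, hmod⟩ := Nat.exists_prime_gt_modEq_one (k := e) N (by omega)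
  have : Fact p.Prime := ⟨hp⟩
  refine ⟨p, hp.two_le, Nat.coprime_of_lt_prime hN hNp hp, ?_⟩
  obtain ⟨g, hg⟩ := IsCyclic.exists_ofOrder_eq_natCard (α := (ZMod p)ˣ)
  have hdvd : e ∣ p - 1 := (Nat.modEq_iff_dvd' hp.one_le).1 hmod.symm
  rw [Nat.card_eq_fintype_card, ZMod.card_units] at hg
  obtain ⟨d, hd⟩ := hdvd
  have hd0 : d ≠ 0 := by
    rintro rfl
    have := hp.two_le
    omega
  have hh : orderOf (g ^ d) = e := by
    rw [orderOf_pow_of_dvd hd0 (by rw [hg, hd]; exact dvd_mul_left _ _), hg, hd]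
    exact Nat.mul_div_cancel _ (Nat.pos_of_ne_zero hd0)
  generalize g ^ d = h at hh
  have hz : (zmultiplesHom (Additive (ZMod p)ˣ)) (Additive.ofMul h) (e : ℤ) = 0 := by
    rw [zmultiplesHom_apply, natCast_zsmul, ← ofMul_pow, ← hh, pow_orderOf_eq_one, ofMul_one]
  refine ⟨AddMonoidHom.toMultiplicativeLeft
    (ZMod.lift e ⟨(zmultiplesHom (Additive (ZMod p)ˣ)) (Additive.ofMul h), hz⟩), ?_⟩
  have hinj : Function.Injective (ZMod.lift e
      ⟨(zmultiplesHom (Additive (ZMod p)ˣ)) (Additive.ofMul h), hz⟩) := by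
    rw [ZMod.lift_injective]
    intro m hm
    simp only [zmultiplesHom_apply] at hm
    rw [← ofMul_zpow, ofMul_eq_zero, ← orderOf_dvd_iff_zpow_eq_one, hh] at hm
    exact (ZMod.intCast_zmod_eq_zero_iff_dvd _ _).2 hm
  intro x hx
  have : ZMod.lift e ⟨(zmultiplesHom (Additive (ZMod p)ˣ)) (Additive.ofMul h), hz⟩
      x.toAdd = 0 := hx
  exact Multiplicative.toAdd.injective (hinj (by rw [this]; simp))

theorem abelian_embed (G : Type*) [CommGroup G] [Finite G] (N : ℕ) (hN : N ≠ 0) :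
    ∃ n : ℕ, 2 ≤ n ∧ Nat.Coprime n N ∧
      ∃ f : G →* (ZMod n)ˣ, Function.Injective f := by
  classical
  obtain ⟨ι, _, e, he, ⟨φ⟩⟩ := CommGroup.equiv_prod_multiplicative_zmod_of_finite G
  have key : ∀ s : Finset ι, ∃ n : ℕ, 2 ≤ n ∧ Nat.Coprime n N ∧
      ∃ f : (∀ i, Multiplicative (ZMod (e i))) →* (ZMod n)ˣ,
        ∀ x, f x = 1 → ∀ i ∈ s, x i = 1 := by
    intro s
    induction s using Finset.induction_on with
    | empty =>
      obtain ⟨p, hNp, hp⟩ := Nat.exists_infinite_primes (N + 1)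
      exact ⟨p, hp.two_le, Nat.coprime_of_lt_prime hN hNp hp, 1, by simp⟩
    | insert a s ha ih =>
      obtain ⟨n, hn, hnN, f, hf⟩ := ih
      obtain ⟨k, hk, hkN, g, hg⟩ := cyc_embed (e a) (he a) (N * n)
        (Nat.mul_ne_zero hN (by omega))
      have hkn : Nat.Coprime k n := Nat.Coprime.coprime_mul_left_right hkN
      have hkN' : Nat.Coprime k N := Nat.Coprime.coprime_mul_right_right hkN
      let E : (ZMod (k * n))ˣ ≃* (ZMod k)ˣ × (ZMod n)ˣ :=
        (Units.mapEquiv (ZMod.chineseRemainder hkn).toMulEquiv).trans MulEquiv.prodUnits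
      refine ⟨k * n, by nlinarith, Nat.Coprime.mul_left hkN' hnN,
        E.symm.toMonoidHom.comp ((g.comp (Pi.evalMonoidHom _ a)).prod f), ?_⟩
      intro x hx
      have hx' : ((g (x a), f x) : (ZMod k)ˣ × (ZMod n)ˣ) = 1 := by
        apply E.symm.injective
        rw [map_one]
        exact hx
      have h1 : g (x a) = 1 := congrArg Prod.fst hx'
      have h2 : f x = 1 := congrArg Prod.snd hx'
      intro i hi
      rcases Finset.mem_insert.1 hi with rfl | hi
      · exact hg _ h1
      · exact hf x h2 i hi
  obtain ⟨n, hn, hnN, f, hf⟩ := key Finset.univ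
  refine ⟨n, hn, hnN, f.comp φ.toMonoidHom, ?_⟩
  rw [injective_iff_map_eq_one]
  intro x hx
  apply φ.injective
  rw [map_one]
  funext i
  exact hf (φ x) hx i (Finset.mem_univ i)

/-- Counting multiples. -/
theorem count_range (n : ℕ) [NeZero n] (x u : ZMod n) (k : ℕ) :
    ∑ t ∈ Finset.range k, (if (x - u * (t : ZMod n)).val < u.val then 1 else 0 : ℕ)
      = u.val * k / n + if x.val < u.val * k % n then 1 else 0 := by
  have hn : 0 < n := Nat.pos_of_ne_zero (NeZero.ne n)
  induction k with
  | zero => simp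
  | succ k ih =>
    rw [Finset.sum_range_succ, ih]
    have hu := ZMod.val_lt u
    have hx := ZMod.val_lt x
    have e1 : u * (k : ZMod n) = ((u.val * k % n : ℕ) : ZMod n) := by
      rw [ZMod.natCast_mod]; push_cast; rw [ZMod.natCast_zmod_val]
    have e0 : u.val * (k + 1) = u.val * k + u.val := by ring
    have hdm := Nat.div_add_mod (u.val * k) n
    have hs : u.val * k % n < n := Nat.mod_lt _ hn
    rw [e1, e0]
    generalize hq : u.val * k / n = q at *
    generalize hr : u.val * k % n = s at *
    have hv : (x - (s : ZMod n)).val = if s ≤ x.val then x.val - s else x.val + n - s := by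
      have hsv : ((s : ZMod n)).val = s := ZMod.val_natCast_of_lt hs
      split_ifs with h
      · rw [ZMod.val_sub (by rw [hsv]; exact h), hsv]
      · have : x - (s : ZMod n) = ((x.val + n - s : ℕ) : ZMod n) := by
          rw [Nat.cast_sub (by omega)]; simp
        rw [this, ZMod.val_natCast_of_lt (by omega)]
    rw [hv, ← hdm, add_assoc (n * q), Nat.mul_add_div hn, Nat.mul_add_mod]
    rcases lt_or_ge (s + u.val) n with h | h
    · rw [Nat.div_eq_of_lt h, Nat.mod_eq_of_lt h]
      split_ifs <;> omega
    · have h2 : (s + u.val) / n = 1 := by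
        rw [Nat.div_eq_iff hn]; constructor <;> omega
      have h3 : (s + u.val) % n = s + u.val - n := by
        rw [Nat.mod_eq_sub_mod h, Nat.mod_eq_of_lt (by omega)]
      rw [h2, h3]
      split_ifs <;> omega

theorem sum_val_lt {M : Type*} [AddCommMonoid M] (n : ℕ) [NeZero n] (k : ℕ) (hk : k ≤ n)
    (f : ZMod n → M) :
    ∑ t : ZMod n, (if t.val < k then f t else 0) = ∑ t ∈ Finset.range k, f (t : ZMod n) := by
  rw [← Finset.sum_filter]
  refine Finset.sum_bij' (fun t _ => t.val) (fun t _ => (t : ZMod n)) ?_ ?_ ?_ ?_ ?_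
  · intro a ha; simpa using ha
  · intro a ha
    have ha := Finset.mem_range.1 ha
    simp [ZMod.val_natCast_of_lt (lt_of_lt_of_le ha hk), ha]
  · intro a ha; simp
  · intro a ha
    exact ZMod.val_natCast_of_lt (lt_of_lt_of_le (Finset.mem_range.1 ha) hk)
  · intro a ha; simp

/-- The indicator part. -/
def ind (F : Type*) [Field F] {n : ℕ} (u x : ZMod n) : F := if x.val < u.val then 1 else 0

theorem sum_ind (F : Type*) [Field F] {n : ℕ} [NeZero n] (u : ZMod n) :
    ∑ x : ZMod n, ind F u x = (u.val : F) := by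
  unfold ind
  rw [sum_val_lt n u.val (ZMod.val_lt u).le (fun _ => (1 : F))]
  simp

theorem sum_ind_ind (F : Type*) [Field F] {n : ℕ} [NeZero n] (u v i l : ZMod n) :
    ∑ j : ZMod n, ind F u (i - u * j) * ind F v (j - v * l)
      = ((u.val * v.val / n : ℕ) : F) + ind F (u * v) (i - u * v * l) := by
  rw [← Equiv.sum_comp (Equiv.addRight (v * l))]
  have h : ∀ t : ZMod n, ind F u (i - u * (Equiv.addRight (v * l) t)) *
      ind F v (Equiv.addRight (v * l) t - v * l) =
      if t.val < v.val then
        (((if ((i - u * v * l) - u * t).val < u.val then 1 else 0 : ℕ)) : F) else 0 := by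
    intro t
    have h1 : i - u * (t + v * l) = (i - u * v * l) - u * t := by ring
    simp only [Equiv.coe_addRight, h1, add_sub_cancel_right, ind]
    split_ifs <;> simp
  rw [Finset.sum_congr rfl (fun t _ => h t), sum_val_lt n v.val (ZMod.val_lt v).le
    (fun t => (((if ((i - u * v * l) - u * t).val < u.val then 1 else 0 : ℕ)) : F)),
    ← Nat.cast_sum, count_range, ind, ZMod.val_mul]
  push_cast
  rfl

/-- The normalised Christoffel matrix indexed by `ZMod n`. -/
noncomputable def cm (F : Type*) [Field F] {n : ℕ} (u : (ZMod n)ˣ) :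
    Matrix (ZMod n) (ZMod n) F :=
  Matrix.of fun i j => ind F (u : ZMod n) (i - u * j) + (1 - ((u : ZMod n).val : F)) / n

theorem cm_mul (F : Type*) [Field F] {n : ℕ} [NeZero n] (hnF : (n : F) ≠ 0) (u v : (ZMod n)ˣ) :
    cm F (u * v) = cm F u * cm F v := by
  ext i l
  rw [Matrix.mul_apply]
  simp only [cm, Matrix.of_apply, Units.val_mul]
  have h1 : ∑ j : ZMod n, ind F (u : ZMod n) (i - u * j) = ((u : ZMod n).val : F) := by
    rw [← sum_ind]
    exact (u.mulLeft.trans (Equiv.subLeft i)).sum_comp (fun x => ind F (u : ZMod n) x)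
  have h2 : ∑ j : ZMod n, ind F (v : ZMod n) (j - v * l) = ((v : ZMod n).val : F) := by
    rw [← sum_ind]
    exact (Equiv.subRight ((v : ZMod n) * l)).sum_comp (fun x => ind F (v : ZMod n) x)
  have h3 := sum_ind_ind F (u : ZMod n) v i l
  simp only [add_mul, mul_add, Finset.sum_add_distrib, ← Finset.sum_mul, ← Finset.mul_sum, h1, h2,
    h3]
  rw [ZMod.val_mul]
  have h4 := Nat.div_add_mod ((u : ZMod n).val * (v : ZMod n).val) n
  have h5 := congrArg (Nat.cast : ℕ → F) h4
  push_cast at h5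
  simp only [Finset.sum_const, Finset.card_univ, ZMod.card, nsmul_eq_mul]
  field_simp
  linear_combination -h5

theorem cm_one (F : Type*) [Field F] {n : ℕ} (hn : 2 ≤ n) :
    cm F (1 : (ZMod n)ˣ) = 1 := by
  have : Fact (1 < n) := ⟨hn⟩
  ext i j
  simp [cm, ind, ZMod.val_one, Matrix.one_apply, sub_eq_zero]

theorem cm_inj (F : Type*) [Field F] {n : ℕ} (hn : 2 ≤ n) (u : (ZMod n)ˣ) (h : cm F u = 1) :
    u = 1 := by
  have : Fact (1 < n) := ⟨hn⟩
  have hpos : 0 < (u : ZMod n).val := by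
    rw [Nat.pos_iff_ne_zero, Ne, ZMod.val_eq_zero]
    exact u.ne_zero
  have h0 := congrFun (congrFun h 0) 0
  have h1 := congrFun (congrFun h 1) 0
  simp only [cm, ind, Matrix.of_apply, mul_zero, sub_zero, ZMod.val_zero, hpos, if_true,
    Matrix.one_apply_eq, Matrix.one_apply_ne (one_ne_zero : (1 : ZMod n) ≠ 0), ZMod.val_one,
    add_eq_left] at h0 h1
  rw [h0] at h1
  have h2 : ¬ 1 < (u : ZMod n).val := by
    intro h2
    simp [h2] at h1
  apply Units.ext
  apply ZMod.val_injective n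
  rw [Units.val_one, ZMod.val_one]
  omega

theorem faithful_christoffel_representation
    (G : Type*) [CommGroup G] [Finite G] (F : Type*) [Field F] [Finite F] :
    ∃ (n : ℕ), 2 ≤ n ∧ ∃ f : G →* GL (Fin n) F, Function.Injective f ∧
      ∀ g : G, IsChristoffel n ((f g : GL (Fin n) F) : Matrix (Fin n) (Fin n) F) := by
  classical
  obtain ⟨n, hn, hcop, φ, hφ⟩ := abelian_embed G (ringChar F) (CharP.ringChar_ne_zero_of_finite F)
  have : NeZero n := ⟨by omega⟩
  have : Fact (1 < n) := ⟨hn⟩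
  have hnF : (n : F) ≠ 0 := by
    intro h
    rw [ringChar.spec] at h
    have h1 := Nat.eq_one_of_dvd_coprimes hcop h dvd_rfl
    exact CharP.ringChar_ne_one h1
  refine ⟨n, hn, ?_⟩
  let e : ZMod n ≃ Fin n :=
    { toFun := fun x => ⟨x.val, ZMod.val_lt x⟩
      invFun := fun i => ((i : ℕ) : ZMod n)
      left_inv := fun x => by simp
      right_inv := fun i => Fin.ext (ZMod.val_natCast_of_lt i.2) }
  let c : (ZMod n)ˣ →* Matrix (ZMod n) (ZMod n) F :=
    { toFun := cm F
      map_one' := cm_one F hn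
      map_mul' := cm_mul F hnF }
  let R := Matrix.reindexAlgEquiv F F e
  let f : G →* GL (Fin n) F :=
    MonoidHom.toHomUnits (((R : Matrix (ZMod n) (ZMod n) F →* Matrix (Fin n) (Fin n) F).comp c).comp φ)
  have hf : ∀ g, ((f g : GL (Fin n) F) : Matrix (Fin n) (Fin n) F) = R (cm F (φ g)) :=
    fun g => rfl
  refine ⟨f, ?_, ?_⟩
  · rw [injective_iff_map_eq_one]
    intro g hg
    apply hφ
    rw [map_one]
    apply cm_inj F hn
    apply R.injective
    rw [← hf, hg, map_one]
    rfl
  · intro g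
    rw [hf]
    generalize φ g = u
    refine ⟨(u : ZMod n).val, 1 + (1 - ((u : ZMod n).val : F)) / n,
      (1 - ((u : ZMod n).val : F)) / n, ?_, ZMod.val_lt _, ZMod.val_coe_unit_coprime u, ?_, ?_⟩
    · rw [Nat.one_le_iff_ne_zero, Ne, ZMod.val_eq_zero]
      exact u.ne_zero
    · simp
    · ext i j
      have : R (cm F u) i j = cm F u ((i : ℕ) : ZMod n) ((j : ℕ) : ZMod n) := rfl
      rw [this]
      simp only [cm, christoffel, ind, Matrix.of_apply, ZMod.natCast_zmod_val]
      split_ifs <;> simp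
end

section
/- For every k ≥ 1, the group GC_{2^k}(𝔽₂) of invertible 2^k × 2^k Christoffel matrices over 𝔽₂ is isomorphic to ℤ/2ℤ × ℤ/2^{k−1}ℤ; in particular for k ≥ 3 it is generated by the element C_3(1,0) of order 2^{k−1} together with the order-2 element C_{2^k−1}(1,0) not in the subgroup generated by C_3(1,0). -/
/-- The extended family `D_M`: `x^j ↦ x^{Mj}(1 + x + ⋯ + x^{M-1})` modulo `x^n - 1`. -/
def chrD (n M : ℕ) : Matrix (Fin n) (Fin n) (ZMod 2) :=
  Matrix.of fun i j =>
    ∑ t ∈ Finset.range M,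
      if ((M * (j : ℕ) + t : ℕ) : ZMod n) = ((i : ℕ) : ZMod n) then 1 else 0

lemma chr_window (n m : ℕ) [NeZero n] (hm : m ≤ n) (c i : ZMod n) :
    (∑ t ∈ Finset.range m, if c + (t : ZMod n) = i then (1 : ZMod 2) else 0)
      = if (i - c).val < m then 1 else 0 := by
  have h : ∀ t ∈ Finset.range m,
      (if c + (t : ZMod n) = i then (1 : ZMod 2) else 0) = if (i - c).val = t then 1 else 0 := by
    intro t ht
    have ht' : t < n := lt_of_lt_of_le (Finset.mem_range.mp ht) hm
    congr 1
    apply propext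
    constructor
    · rintro rfl
      rw [add_sub_cancel_left, ZMod.val_natCast_of_lt ht']
    · intro h
      have := ZMod.natCast_zmod_val (i - c)
      rw [h] at this
      rw [this]; ring
  rw [Finset.sum_congr rfl h, Finset.sum_ite_eq]
  simp [Finset.mem_range]

lemma chrD_add_n (n M : ℕ) [NeZero n] (i j : Fin n) :
    chrD n (M + n) i j = chrD n M i j + 1 := by
  unfold chrD
  simp only [Matrix.of_apply]
  rw [Finset.sum_range_add]
  congr 1
  · apply Finset.sum_congr rfl
    intro t _
    simp
  · have := chr_window n n le_rfl ((M : ZMod n) * ((j : ℕ) : ZMod n) + M) ((i : ℕ) : ZMod n)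
    rw [if_pos (ZMod.val_lt _)] at this
    refine Eq.trans ?_ this
    apply Finset.sum_congr rfl
    intro t _
    simp [add_assoc]

lemma chrD_add_two_n (n M : ℕ) [NeZero n] : chrD n (M + 2 * n) = chrD n M := by
  ext i j
  rw [two_mul, ← add_assoc, chrD_add_n, chrD_add_n, add_assoc]
  have : (1 + 1 : ZMod 2) = 0 := by decide
  rw [this, add_zero]

lemma chrD_mod (n M : ℕ) [NeZero n] : chrD n (M % (2 * n)) = chrD n M := by
  have h : ∀ q r : ℕ, chrD n (r + 2 * n * q) = chrD n r := by
    intro q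
    induction q with
    | zero => intro r; simp
    | succ q ih => intro r; rw [mul_add, mul_one, ← add_assoc, chrD_add_two_n, ih]
  conv_rhs => rw [← Nat.mod_add_div M (2 * n)]
  rw [h]

lemma chr_sum_mul (M L : ℕ) (f : ℕ → ZMod 2) :
    ∑ s ∈ Finset.range L, ∑ t ∈ Finset.range M, f (M * s + t)
      = ∑ u ∈ Finset.range (M * L), f u := by
  induction L with
  | zero => simp
  | succ L ih => rw [Finset.sum_range_succ, ih, mul_add, mul_one, Finset.sum_range_add]

lemma chrD_mul (n M L : ℕ) [NeZero n] : chrD n M * chrD n L = chrD n (M * L) := by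
  ext i j
  rw [Matrix.mul_apply]
  simp only [chrD, Matrix.of_apply]
  simp only [Finset.mul_sum]
  rw [Finset.sum_comm]
  have h : ∀ s ∈ Finset.range L,
      (∑ l : Fin n, (∑ t ∈ Finset.range M,
          if ((M * (l : ℕ) + t : ℕ) : ZMod n) = ((i : ℕ) : ZMod n) then (1 : ZMod 2) else 0) *
        (if ((L * (j : ℕ) + s : ℕ) : ZMod n) = ((l : ℕ) : ZMod n) then (1 : ZMod 2) else 0))
      = ∑ t ∈ Finset.range M,
          if ((M * L * (j : ℕ) + (M * s + t) : ℕ) : ZMod n) = ((i : ℕ) : ZMod n)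
            then (1 : ZMod 2) else 0 := by
    intro s _
    have hlt : (L * (j : ℕ) + s) % n < n := Nat.mod_lt _ (NeZero.pos n)
    rw [Finset.sum_eq_single (⟨(L * (j : ℕ) + s) % n, hlt⟩ : Fin n)]
    · have e : (((L * (j : ℕ) + s) % n : ℕ) : ZMod n) = ((L * (j : ℕ) + s : ℕ) : ZMod n) :=
        ZMod.natCast_mod _ _
      simp only [e, if_true, mul_one]
      apply Finset.sum_congr rfl
      intro t _
      have : ((M * ((L * (j : ℕ) + s) % n) + t : ℕ) : ZMod n)
          = ((M * L * (j : ℕ) + (M * s + t) : ℕ) : ZMod n) := by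
        rw [Nat.cast_add, Nat.cast_mul, e]
        push_cast
        ring
      rw [this]
    · intro l _ hl
      rw [if_neg, mul_zero]
      intro h
      apply hl
      rw [ZMod.natCast_eq_natCast_iff', Nat.mod_eq_of_lt l.2] at h
      exact Fin.ext h.symm
    · simp
  rw [Finset.sum_congr rfl h]
  exact chr_sum_mul M L
    (fun u => if ((M * L * (j : ℕ) + u : ℕ) : ZMod n) = ((i : ℕ) : ZMod n)
      then (1 : ZMod 2) else 0)

lemma christoffel_one_zero (n m : ℕ) [NeZero n] (hm : m ≤ n) :
    christoffel n m (1 : ZMod 2) 0 = chrD n m := by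
  ext i j
  simp only [christoffel, chrD, Matrix.of_apply]
  rw [← chr_window n m hm]
  simp

lemma christoffel_zero_one (n m : ℕ) [NeZero n] (hm : m ≤ n) :
    christoffel n m (0 : ZMod 2) 1 = chrD n (m + n) := by
  ext i j
  rw [chrD_add_n, ← christoffel_one_zero n m hm]
  simp only [christoffel, Matrix.of_apply]
  split_ifs <;> decide

lemma chrD_one (n : ℕ) [NeZero n] : chrD n 1 = 1 := by
  ext i j
  simp only [chrD, Matrix.of_apply, Finset.range_one, Finset.sum_singleton, one_mul, add_zero]
  rw [Matrix.one_apply]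
  congr 1
  rw [ZMod.natCast_eq_natCast_iff', Nat.mod_eq_of_lt j.2, Nat.mod_eq_of_lt i.2]
  apply propext
  rw [Fin.ext_iff]
  exact eq_comm

lemma chrD_eq_one (n M : ℕ) (hn : 2 ≤ n) (hM : M < 2 * n) (hMn : M ≠ n) (h0 : M ≠ 0)
    (h : chrD n M = 1) : M = 1 := by
  have : NeZero n := ⟨by omega⟩
  rcases lt_or_ge M n with hlt | hge
  · by_contra h1
    rw [← christoffel_one_zero n M hlt.le] at h
    have h2 := congrFun (congrFun h ⟨1, by omega⟩) ⟨0, by omega⟩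
    rw [Matrix.one_apply, if_neg (by simp)] at h2
    simp only [christoffel, Matrix.of_apply] at h2
    rw [if_pos] at h2
    · exact absurd h2 (by decide)
    · have : ((1 : ℕ) : ZMod n).val = 1 := ZMod.val_natCast_of_lt (by omega)
      simp only [Nat.cast_zero, mul_zero, sub_zero, this]
      omega
  · exfalso
    obtain ⟨m, rfl⟩ : ∃ m, M = m + n := ⟨M - n, by omega⟩
    rw [← christoffel_zero_one n m (by omega)] at h
    have h2 := congrFun (congrFun h ⟨0, by omega⟩) ⟨0, by omega⟩
    rw [Matrix.one_apply, if_pos rfl] at h2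
    simp only [christoffel, Matrix.of_apply] at h2
    rw [if_pos] at h2
    · exact absurd h2 (by decide)
    · simp; omega

/-- The representation of `(ℤ/2nℤ)ˣ` by the matrices `D_M`. -/
def chrHom (n : ℕ) [NeZero n] : (ZMod (2 * n))ˣ →* Matrix (Fin n) (Fin n) (ZMod 2) where
  toFun u := chrD n (u : ZMod (2 * n)).val
  map_one' := by
    have hn := NeZero.pos n
    have : (1 : ZMod (2 * n)).val = 1 := by
      have := ZMod.val_natCast_of_lt (n := 2 * n) (a := 1) (by omega)
      simpa using this
    rw [Units.val_one, this, chrD_one]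
  map_mul' u v := by
    rw [Units.val_mul, ZMod.val_mul, chrD_mod, chrD_mul]

lemma chrHom_natCast (n m : ℕ) [NeZero n] (u : (ZMod (2 * n))ˣ) (h : (u : ZMod (2 * n)) = m) :
    chrHom n u = chrD n m := by
  change chrD n (u : ZMod (2 * n)).val = _
  rw [h, ZMod.val_natCast, chrD_mod]

lemma chrHom_injective (n : ℕ) [NeZero n] (hn : 2 ≤ n) : Function.Injective (chrHom n) := by
  rw [injective_iff_map_eq_one]
  intro u hu
  have hc : (u : ZMod (2 * n)).val.Coprime (2 * n) := ZMod.val_coe_unit_coprime u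
  have h1 : (u : ZMod (2 * n)).val = 1 := by
    apply chrD_eq_one n _ hn (ZMod.val_lt _) _ _ hu
    · intro h
      rw [h] at hc
      have := Nat.Coprime.eq_one_of_dvd hc (Dvd.intro_left _ rfl)
      omega
    · intro h
      rw [h] at hc
      simp at hc
  ext
  rw [← ZMod.natCast_zmod_val (u : ZMod (2 * n)), h1]
  simp

lemma isChristoffel_iff (k : ℕ) (hk : 1 ≤ k) (B : Matrix (Fin (2 ^ k)) (Fin (2 ^ k)) (ZMod 2)) :
    IsChristoffel (2 ^ k) B ↔ ∃ u, chrHom (2 ^ k) u = B := by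
  have hpos : 2 ≤ 2 ^ k := by
    calc 2 = 2 ^ 1 := rfl
      _ ≤ 2 ^ k := Nat.pow_le_pow_right (by norm_num) hk
  have h22 : 2 * 2 ^ k = 2 ^ (k + 1) := by ring
  have hev : 2 ∣ 2 ^ k := dvd_pow_self 2 (by omega)
  constructor
  · rintro ⟨m, a, b, h1, h2, hc, hab, rfl⟩
    have hodd : m.Coprime 2 := Nat.Coprime.coprime_dvd_right hev hc
    have ha : (a = 1 ∧ b = 0) ∨ (a = 0 ∧ b = 1) := by
      revert a b; decide
    rcases ha with ⟨rfl, rfl⟩ | ⟨rfl, rfl⟩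
    · refine ⟨ZMod.unitOfCoprime m (by rw [h22]; exact hodd.pow_right _), ?_⟩
      rw [chrHom_natCast _ m _ (ZMod.coe_unitOfCoprime _ _), christoffel_one_zero _ _ h2.le]
    · have hodd' : (m + 2 ^ k).Coprime 2 := by
        rw [Nat.coprime_two_right] at hodd ⊢
        exact hodd.add_even (even_iff_two_dvd.mpr hev)
      refine ⟨ZMod.unitOfCoprime (m + 2 ^ k) (by rw [h22]; exact hodd'.pow_right _), ?_⟩
      rw [chrHom_natCast _ (m + 2 ^ k) _ (ZMod.coe_unitOfCoprime _ _),
        christoffel_zero_one _ _ h2.le]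
  · rintro ⟨u, rfl⟩
    have hc : (u : ZMod (2 * 2 ^ k)).val.Coprime (2 * 2 ^ k) := ZMod.val_coe_unit_coprime u
    have hlt := ZMod.val_lt (u : ZMod (2 * 2 ^ k))
    have hodd : Odd (u : ZMod (2 * 2 ^ k)).val := by
      rw [← Nat.coprime_two_right]
      exact Nat.Coprime.coprime_dvd_right (Dvd.intro _ rfl) hc
    change IsChristoffel _ (chrD (2 ^ k) (u : ZMod (2 * 2 ^ k)).val)
    generalize (u : ZMod (2 * 2 ^ k)).val = M at *
    have hoe : Even (2 ^ k) := even_iff_two_dvd.mpr hev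
    rcases lt_or_ge M (2 ^ k) with h | h
    · refine ⟨M, 1, 0, hodd.pos, h, ?_, by decide, (christoffel_one_zero _ _ h.le).symm⟩
      exact (Nat.coprime_two_right.mpr hodd).pow_right _
    · obtain ⟨m, rfl⟩ : ∃ m, M = m + 2 ^ k := ⟨M - 2 ^ k, by omega⟩
      have hm : Odd m := by
        have := Nat.odd_add.mp hodd
        exact this.mpr hoe
      refine ⟨m, 0, 1, hm.pos, by omega, ?_, by decide,
        (christoffel_zero_one _ _ (by omega)).symm⟩
      exact (Nat.coprime_two_right.mpr hm).pow_right _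

section GroupLemma

variable {G : Type*} [CommGroup G] [Finite G]

lemma grp_bij (x y : G) (A : ℕ) (hx : orderOf x = A) (hy : orderOf y = 2)
    (hyx : y ∉ Subgroup.zpowers x) (hG : Nat.card G = 2 * A) :
    Function.Bijective
      ((Subgroup.zpowers y).subtype.coprod (Subgroup.zpowers x).subtype) := by
  rw [Nat.bijective_iff_injective_and_card]
  constructor
  · rw [injective_iff_map_eq_one]
    rintro ⟨⟨a, ha⟩, ⟨b, hb⟩⟩ h
    simp only [MonoidHom.coprod_apply, Subgroup.subtype_apply] at h
    obtain ⟨j, rfl⟩ := Subgroup.mem_zpowers_iff.mp ha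
    have hy2 : y ^ (2 : ℤ) = 1 := by
      have := pow_orderOf_eq_one y
      rw [hy] at this
      exact_mod_cast this
    rcases Int.even_or_odd' j with ⟨c, rfl | rfl⟩
    · have e : y ^ (2 * c) = 1 := by rw [zpow_mul, hy2, one_zpow]
      rw [e, one_mul] at h
      subst h
      simp [e]
    · exfalso
      have e : y ^ (2 * c + 1) = y := by rw [zpow_add, zpow_mul, hy2, one_zpow, one_mul, zpow_one]
      rw [e] at h
      apply hyx
      rw [eq_inv_of_mul_eq_one_left h]
      exact inv_mem hb
  · rw [Nat.card_prod, Nat.card_zpowers, Nat.card_zpowers, hx, hy, hG]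

lemma grp_iso (x y : G) (A : ℕ) (hx : orderOf x = A) (hy : orderOf y = 2)
    (hyx : y ∉ Subgroup.zpowers x) (hG : Nat.card G = 2 * A) :
    Nonempty (G ≃* Multiplicative (ZMod 2 × ZMod A)) := by
  have e := MulEquiv.ofBijective _ (grp_bij x y A hx hy hyx hG)
  have e1 : Multiplicative (ZMod 2) ≃* Subgroup.zpowers y :=
    mulEquivOfCyclicCardEq (by rw [Nat.card_zpowers, hy]; exact Nat.card_zmod 2)
  have e2 : Multiplicative (ZMod A) ≃* Subgroup.zpowers x :=
    mulEquivOfCyclicCardEq (by rw [Nat.card_zpowers, hx]; exact Nat.card_zmod A)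
  exact ⟨e.symm.trans ((e1.prodCongr e2).symm.trans (MulEquiv.prodMultiplicative _ _).symm)⟩

lemma grp_gen (x y : G) (A : ℕ) (hx : orderOf x = A) (hy : orderOf y = 2)
    (hyx : y ∉ Subgroup.zpowers x) (hG : Nat.card G = 2 * A) (g : G) :
    ∃ i j : ℕ, g = x ^ i * y ^ j := by
  obtain ⟨⟨⟨a, ha⟩, ⟨b, hb⟩⟩, h⟩ := (grp_bij x y A hx hy hyx hG).2 g
  rw [← mem_powers_iff_mem_zpowers] at ha hb
  obtain ⟨j, rfl⟩ := ha
  obtain ⟨i, rfl⟩ := hb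
  refine ⟨i, j, ?_⟩
  rw [← h, mul_comm]
  rfl

end GroupLemma

lemma units_card (k : ℕ) (hk : 1 ≤ k) : Nat.card (ZMod (2 * 2 ^ k))ˣ = 2 * 2 ^ (k - 1) := by
  rw [Nat.card_eq_fintype_card, ZMod.card_units_eq_totient, ← pow_succ',
    Nat.totient_prime_pow_succ Nat.prime_two, ← pow_succ', Nat.sub_add_cancel hk]
  simp

lemma units_iso (k : ℕ) (hk : 1 ≤ k) :
    Nonempty ((ZMod (2 * 2 ^ k))ˣ ≃* Multiplicative (ZMod 2 × ZMod (2 ^ (k - 1)))) := by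
  have h22 : 2 * 2 ^ k = 2 ^ (k + 1) := by ring
  have hd : 4 ∣ 2 * 2 ^ k := by
    rw [h22]; exact pow_dvd_pow 2 (show 2 ≤ k + 1 by omega)
  have h5 : Nat.Coprime 5 (2 * 2 ^ k) := by
    rw [h22]; exact Nat.Coprime.pow_right _ (by norm_num)
  have key : ∀ u ∈ Subgroup.zpowers (ZMod.unitOfCoprime 5 h5), ZMod.unitsMap hd u = 1 := by
    intro u hu
    obtain ⟨j, rfl⟩ := Subgroup.mem_zpowers_iff.mp hu
    rw [map_zpow]
    have : ZMod.unitsMap hd (ZMod.unitOfCoprime 5 h5) = 1 := by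
      ext
      change ZMod.castHom hd (ZMod 4) (ZMod.unitOfCoprime 5 h5 : ZMod (2 * 2 ^ k)) = 1
      rw [ZMod.coe_unitOfCoprime, map_natCast]
      decide
    rw [this, one_zpow]
  have hne : ZMod.unitsMap hd (-1) ≠ 1 := by
    intro h
    have := congrArg Units.val h
    simp [ZMod.unitsMap_def] at this
    revert this
    decide
  refine grp_iso (ZMod.unitOfCoprime 5 h5) (-1) _ ?_ ?_ ?_ (units_card k hk)
  · rw [← orderOf_units, ZMod.coe_unitOfCoprime]
    have := ZMod.orderOf_five (k - 1)
    rw [show k - 1 + 2 = k + 1 by omega, ← h22] at this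
    exact_mod_cast this
  · apply orderOf_eq_prime
    · simp
    · intro h
      apply hne
      rw [h, map_one]
  · intro h
    exact hne (key _ h)

lemma order_three (k : ℕ) (hk : 3 ≤ k) :
    orderOf ((3 : ℕ) : ZMod (2 * 2 ^ k)) = 2 ^ (k - 1) := by
  have h9 := ZMod.orderOf_one_add_mul_prime_pow Nat.prime_two 3 (by norm_num) (by norm_num) 1
    (by norm_num) (k - 2)
  obtain ⟨l, rfl⟩ : ∃ l, k = l + 3 := ⟨k - 3, by omega⟩
  rw [show l + 3 - 2 + 3 = l + 3 + 1 by omega, pow_succ' 2 (l + 3)] at h9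
  rw [show l + 3 - 2 = l + 1 by omega] at h9
  have e : (1 + ((2 : ℕ) : ZMod (2 * 2 ^ (l + 3))) ^ 3 * ((1 : ℤ) : ZMod (2 * 2 ^ (l + 3))))
      = ((3 : ℕ) : ZMod (2 * 2 ^ (l + 3))) ^ 2 := by
    push_cast; ring
  rw [e] at h9
  have := Fact.mk Nat.prime_two
  rw [show l + 3 - 1 = (l + 1) + 1 by omega]
  apply orderOf_eq_prime_pow
  · intro h
    rw [pow_succ' 2 l, pow_mul] at h
    have h1 := orderOf_dvd_of_pow_eq_one h
    rw [h9] at h1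
    have := Nat.pow_dvd_pow_iff_le_right (by norm_num : 1 < 2) |>.mp h1
    omega
  · rw [pow_succ' 2 (l + 1), pow_mul, ← h9]
    exact pow_orderOf_eq_one _

theorem christoffel_group_two_pow (k : ℕ) (hk : 1 ≤ k) :
    (∃ G : Subgroup (GL (Fin (2 ^ k)) (ZMod 2)),
      (∀ A : GL (Fin (2 ^ k)) (ZMod 2),
        A ∈ G ↔ IsChristoffel (2 ^ k) ((A : GL (Fin (2 ^ k)) (ZMod 2)) :
          Matrix (Fin (2 ^ k)) (Fin (2 ^ k)) (ZMod 2))) ∧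
      Nonempty (G ≃* Multiplicative (ZMod 2 × ZMod (2 ^ (k - 1))))) ∧
    (3 ≤ k →
      orderOf (christoffel (2 ^ k) 3 (1 : ZMod 2) 0) = 2 ^ (k - 1) ∧
      orderOf (christoffel (2 ^ k) (2 ^ k - 1) (1 : ZMod 2) 0) = 2 ∧
      (∀ j : ℕ, christoffel (2 ^ k) (2 ^ k - 1) (1 : ZMod 2) 0 ≠
        (christoffel (2 ^ k) 3 (1 : ZMod 2) 0) ^ j) ∧
      (∀ B : Matrix (Fin (2 ^ k)) (Fin (2 ^ k)) (ZMod 2),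
        IsChristoffel (2 ^ k) B → IsUnit B.det →
        ∃ i j : ℕ, B = (christoffel (2 ^ k) 3 (1 : ZMod 2) 0) ^ i *
          (christoffel (2 ^ k) (2 ^ k - 1) (1 : ZMod 2) 0) ^ j)) := by
  have hpos : 2 ≤ 2 ^ k := by
    calc 2 = 2 ^ 1 := rfl
      _ ≤ 2 ^ k := Nat.pow_le_pow_right (by norm_num) hk
  have hinj := chrHom_injective (2 ^ k) hpos
  constructor
  · refine ⟨(chrHom (2 ^ k)).toHomUnits.range, ?_, ?_⟩
    · intro A
      rw [isChristoffel_iff k hk, MonoidHom.mem_range]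
      constructor
      · rintro ⟨u, rfl⟩
        exact ⟨u, rfl⟩
      · rintro ⟨u, hu⟩
        exact ⟨u, Units.ext hu⟩
    · obtain ⟨e⟩ := units_iso k hk
      have hinj' : Function.Injective (chrHom (2 ^ k)).toHomUnits := by
        intro u v h
        exact hinj (congrArg Units.val h)
      exact ⟨(MonoidHom.ofInjective hinj').symm.trans e⟩
  · intro hk3
    have h8 : 8 ≤ 2 ^ k := by
      calc 8 = 2 ^ 3 := rfl
        _ ≤ 2 ^ k := Nat.pow_le_pow_right (by norm_num) hk3
    have h22 : 2 * 2 ^ k = 2 ^ (k + 1) := by ring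
    have hd8 : 8 ∣ 2 ^ k := pow_dvd_pow 2 hk3
    have hd : 8 ∣ 2 * 2 ^ k := Dvd.dvd.mul_left hd8 2
    have c3 : Nat.Coprime 3 (2 * 2 ^ k) := by
      rw [h22]; exact Nat.Coprime.pow_right _ (by norm_num)
    have cw : Nat.Coprime (2 ^ k - 1) (2 * 2 ^ k) := by
      rw [h22]
      apply Nat.Coprime.pow_right
      rw [Nat.coprime_two_right, Nat.odd_iff]
      omega
    obtain ⟨x, hx⟩ : ∃ x : (ZMod (2 * 2 ^ k))ˣ, (x : ZMod (2 * 2 ^ k)) = (3 : ℕ) :=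
      ⟨ZMod.unitOfCoprime 3 c3, ZMod.coe_unitOfCoprime _ _⟩
    obtain ⟨w, hw⟩ : ∃ w : (ZMod (2 * 2 ^ k))ˣ, (w : ZMod (2 * 2 ^ k)) = (2 ^ k - 1 : ℕ) :=
      ⟨ZMod.unitOfCoprime _ cw, ZMod.coe_unitOfCoprime _ _⟩
    have ex : christoffel (2 ^ k) 3 (1 : ZMod 2) 0 = chrHom (2 ^ k) x := by
      rw [chrHom_natCast _ _ _ hx, christoffel_one_zero _ _ (by omega)]
    have ew : christoffel (2 ^ k) (2 ^ k - 1) (1 : ZMod 2) 0 = chrHom (2 ^ k) w := by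
      rw [chrHom_natCast _ _ _ hw, christoffel_one_zero _ _ (by omega)]
    have ox : orderOf x = 2 ^ (k - 1) := by
      rw [← orderOf_units, hx, order_three k hk3]
    have mx : ((ZMod.unitsMap hd x : (ZMod 8)ˣ) : ZMod 8) = 3 := by
      change ZMod.castHom hd (ZMod 8) (x : ZMod (2 * 2 ^ k)) = 3
      rw [hx, map_natCast]
      rfl
    have mw : ((ZMod.unitsMap hd w : (ZMod 8)ˣ) : ZMod 8) = 7 := by
      have h7 : ((2 ^ k - 1 : ℕ) : ZMod 8) = ((7 : ℕ) : ZMod 8) := by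
        rw [ZMod.natCast_eq_natCast_iff']
        omega
      have : ((ZMod.unitsMap hd w : (ZMod 8)ˣ) : ZMod 8)
          = ZMod.castHom hd (ZMod 8) (w : ZMod (2 * 2 ^ k)) := rfl
      rw [this, hw, map_natCast, h7]
      rfl
    have hwj : ∀ j : ℕ, w ≠ x ^ j := by
      intro j h
      have h1 := congrArg (fun u => ((ZMod.unitsMap hd u : (ZMod 8)ˣ) : ZMod 8)) h
      simp only [map_pow, Units.val_pow_eq_pow_val, mx, mw] at h1
      have h9 : (3 : ZMod 8) ^ 2 = 1 := by decide
      rcases Nat.even_or_odd' j with ⟨c, rfl | rfl⟩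
      · rw [pow_mul, h9, one_pow] at h1
        exact absurd h1 (by decide)
      · rw [pow_succ, pow_mul, h9, one_pow] at h1
        exact absurd h1 (by decide)
    have ow : orderOf w = 2 := by
      have := Fact.mk Nat.prime_two
      apply orderOf_eq_prime
      · ext
        rw [Units.val_pow_eq_pow_val, hw, Units.val_one, ← Nat.cast_pow]
        have : (2 ^ k - 1) ^ 2 = 2 * 2 ^ k * (2 ^ (k - 1) - 1) + 1 := by
          obtain ⟨l, rfl⟩ : ∃ l, k = l + 1 := ⟨k - 1, by omega⟩
          obtain ⟨t, ht⟩ : ∃ t, 2 ^ l = t + 1 := ⟨2 ^ l - 1, by have := Nat.one_le_two_pow (n := l); omega⟩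
          rw [Nat.add_sub_cancel, pow_succ 2 l, ht, Nat.add_sub_cancel,
            show (t + 1) * 2 - 1 = 2 * t + 1 by omega]
          ring
        rw [this, Nat.cast_add, Nat.cast_mul, ZMod.natCast_self]
        simp
      · intro h
        exact hwj 0 (by simpa using h)
    have hwx : w ∉ Subgroup.zpowers x := by
      rw [← mem_powers_iff_mem_zpowers]
      rintro ⟨j, hj⟩
      exact hwj j hj.symm
    rw [ex, ew]
    refine ⟨?_, ?_, ?_, ?_⟩
    · rw [orderOf_injective _ hinj, ox]
    · rw [orderOf_injective _ hinj, ow]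
    · intro j h
      rw [← map_pow] at h
      exact hwj j (hinj h)
    · intro B hB _
      obtain ⟨u, rfl⟩ := (isChristoffel_iff k hk B).mp hB
      obtain ⟨i, j, rfl⟩ := grp_gen x w _ ox ow hwx (units_card k hk) u
      exact ⟨i, j, by simp⟩
end
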